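/- For every z ∈ ℂ with z ∉ Λ and z + 2ℓ ∉ Λ, the quasi-periodicity relations f₂(z + 2ℓ) = f₂(z) + (2π/δ)·ζ₂(z) + (π/δ)² and f₂(z + 2iδ) = f₂(z) hold. -/

import Mathlib

open Complex Filter MeasureTheory Finset

noncomputable section

/-- The period lattice with half-periods `ℓ` and `iδ`. -/
def Lambda (ℓ δ : ℝ) : Set ℂ :=
  {z | ∃ n m : ℤ, z = 2 * (n : ℂ) * (ℓ : ℂ) + 2 * (m : ℂ) * ((δ : ℂ) * Complex.I)}

/-- The nonzero lattice points. -/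
def latticePts (ℓ δ : ℝ) : Set ℂ := Lambda ℓ δ \ {0}

/-- Weierstrass ℘-function with half-periods `ℓ`, `iδ`. -/
def wP (ℓ δ : ℝ) (z : ℂ) : ℂ :=
  1 / z ^ 2 + ∑' ω : latticePts ℓ δ, (1 / (z - (ω : ℂ)) ^ 2 - 1 / (ω : ℂ) ^ 2)

/-- Weierstrass ζ-function with half-periods `ℓ`, `iδ`. -/
def wZeta (ℓ δ : ℝ) (z : ℂ) : ℂ :=
  1 / z + ∑' ω : latticePts ℓ δ, (1 / (z - (ω : ℂ)) + 1 / (ω : ℂ) + z / (ω : ℂ) ^ 2)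

def zeta2 (ℓ δ : ℝ) (z : ℂ) : ℂ :=
  wZeta ℓ δ z - (wZeta ℓ δ ((δ : ℂ) * Complex.I) / ((δ : ℂ) * Complex.I)) * z

def wp2 (ℓ δ : ℝ) (z : ℂ) : ℂ :=
  wP ℓ δ z + wZeta ℓ δ ((δ : ℂ) * Complex.I) / ((δ : ℂ) * Complex.I)

def f2 (ℓ δ : ℝ) (z : ℂ) : ℂ := (zeta2 ℓ δ z) ^ 2 - wp2 ℓ δ z

def zeta1 (ℓ δ : ℝ) (z : ℂ) : ℂ :=
  wZeta ℓ δ z - (wZeta ℓ δ (ℓ : ℂ) / (ℓ : ℂ)) * z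

/-- Bilinear dot product on `ℂ³` (no conjugation). -/
def dot3 (s t : Fin 3 → ℂ) : ℂ := s 0 * t 0 + s 1 * t 1 + s 2 * t 2

/-- Cross product on `ℂ³`. -/
def cross3 (s t : Fin 3 → ℂ) : Fin 3 → ℂ :=
  ![s 1 * t 2 - s 2 * t 1, s 2 * t 0 - s 0 * t 2, s 0 * t 1 - s 1 * t 0]

/-- The principal-value integral operator `T`. -/
def pvT (ℓ δ : ℝ) (f : ℝ → Fin 3 → ℂ) (x : ℝ) : Fin 3 → ℂ := fun i =>
  (1 / (Real.pi : ℂ)) * limUnder (nhdsWithin (0 : ℝ) (Set.Ioi 0)) (fun ε : ℝ =>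
    ∫ y in {y : ℝ | y ∈ Set.Icc (-ℓ) ℓ ∧ ε ≤ |y - x|},
      zeta1 ℓ δ ((y : ℂ) - (x : ℂ)) * f y i)

/-- The integral operator `T̃`. -/
def tilT (ℓ δ : ℝ) (f : ℝ → Fin 3 → ℂ) (x : ℝ) : Fin 3 → ℂ := fun i =>
  (1 / (Real.pi : ℂ)) * ∫ y in Set.Icc (-ℓ) ℓ,
      zeta1 ℓ δ ((y : ℂ) - (x : ℂ) + (δ : ℂ) * Complex.I) * f y i

/-!
Sum the series of `ζ u - ζ v` row by row, the rows of the lattice being parallel to `ω₂`. A row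
contributes a difference of two cotangents of period `ω₂` plus `u - v` times the sum of `1 / w²`
over the row. For `u, v = ± ω₂ / 2` the cotangents cancel, so the sums of `1 / w²` add up to
`ζ (ω₂ / 2) / (ω₂ / 2)`, because `ζ` is odd. Passing from `ζ` to `ζ₂` removes exactly this part, and
`ζ₂ u - ζ₂ v` is a sum of differences of cotangents alone. This sum vanishes for `u = v + ω₂`. For
`u = v + ω₁` it telescopes, and the limits `∓ i` of the cotangent at `± i ∞` give the jump
`2πi / ω₂`, which is `π / δ` for `ω₂ = 2iδ`. Both relations follow, as `℘` is elliptic.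
-/

open scoped Topology PeriodPair

section InfiniteSums

variable {M : Type*} [AddCommGroup M] [TopologicalSpace M] [IsTopologicalAddGroup M] [T2Space M]

lemma eq_sub_of_hasSum_int_succ_sub {f : ℤ → M} {s a b : M}
    (hf : HasSum (fun n => f (n + 1) - f n) s)
    (ha : Tendsto f atTop (𝓝 a)) (hb : Tendsto f atBot (𝓝 b)) : s = a - b := by
  have hpartial (N : ℕ) :
      ∑ n ∈ range N, ((f (n + 1) - f n) + (f (-(n + 1 : ℤ) + 1) - f (-(n + 1 : ℤ))))
        = f N - f (-N) := by
    have hterm (n : ℕ) : (f (n + 1) - f n) + (f (-(n + 1 : ℤ) + 1) - f (-(n + 1 : ℤ)))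
        = (f (n + 1 : ℕ) - f (-(n + 1 : ℕ))) - (f n - f (-n)) := by
      push_cast
      rw [neg_add, neg_add_cancel_right]
      abel
    simp only [hterm, sum_range_sub (fun n : ℕ => f n - f (-n))]
    simp
  have hcast : Tendsto (fun N : ℕ => (N : ℤ)) atTop atTop := tendsto_natCast_atTop_atTop
  refine tendsto_nhds_unique hf.nat_add_neg_add_one.tendsto_sum_nat ?_
  simp only [hpartial]
  exact (ha.comp hcast).sub (hb.comp (tendsto_neg_atTop_atBot.comp hcast))

lemma tsum_subtype_eq_add_tsum_sdiff_singleton {α : Type*} {s : Set α} {a : α} (ha : a ∈ s)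
    {f : α → M} (hf : Summable fun x : s => f x) :
    ∑' x : s, f x = f a + ∑' x : (s \ {a} : Set α), f x := by
  classical
  have hsdiff : (s \ {a}).indicator f = fun x => if x = a then 0 else s.indicator f x := by
    ext x
    by_cases hx : x = a <;> simp [Set.indicator_apply, hx]
  rw [_root_.tsum_subtype, _root_.tsum_subtype, hsdiff,
    (summable_subtype_iff_indicator.mp hf).tsum_eq_add_tsum_ite a, Set.indicator_of_mem ha]

end InfiniteSums

section Cotangent

lemma cot_periodic : Function.Periodic Complex.cot Real.pi := fun z => by
  simp [Complex.cot, Complex.sin_add_pi, Complex.cos_add_pi]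

lemma cot_neg (z : ℂ) : Complex.cot (-z) = -Complex.cot z := by
  simp [Complex.cot, div_neg]

lemma tendsto_cot_comap_im_atTop : Tendsto Complex.cot (comap im atTop) (𝓝 (-I)) := by
  have hexp : Tendsto (fun z : ℂ => exp (2 * I * z)) (comap im atTop) (𝓝 0) := by
    refine Complex.tendsto_exp_comap_re_atBot.comp (tendsto_comap_iff.mpr ?_)
    have hre : re ∘ (fun z : ℂ => 2 * I * z) = fun z => -(2 * z.im) := by ext; simp
    rw [hre]
    exact tendsto_neg_atTop_atBot.comp (tendsto_comap.const_mul_atTop two_pos)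
  have hratio := (hexp.add_const 1).div ((hexp.const_sub 1).const_mul I) (by simp)
  simpa [Pi.div_def, ← Complex.cot_eq_exp_ratio] using hratio

lemma tendsto_cot_comap_im_atBot : Tendsto Complex.cot (comap im atBot) (𝓝 I) := by
  have hneg : Tendsto (fun z : ℂ => -z) (comap im atBot) (comap im atTop) :=
    tendsto_comap_iff.mpr (tendsto_neg_atBot_atTop.comp tendsto_comap)
  simpa [Function.comp_def, cot_neg] using (tendsto_cot_comap_im_atTop.comp hneg).neg

lemma summable_int_one_div_add_sub_one_div_add {u v : ℂ} (hu : u ∈ integerComplement)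
    (hv : v ∈ integerComplement) :
    Summable fun m : ℤ => 1 / (u + m) - 1 / (v + m) := by
  have hprod : Summable fun m : ℤ => ((u + m) * (v + m))⁻¹ := by
    refine EisensteinSeries.summable_inv_of_isBigO_rpow_inv (a := 2) one_lt_two ?_
    simpa [pow_two] using (EisensteinSeries.linear_inv_isBigO_right 1 v).mul
      (EisensteinSeries.linear_inv_isBigO_right 1 u)
  refine (hprod.mul_left (v - u)).congr fun m => ?_
  have hum := integerComplement_add_ne_zero hu m
  have hvm := integerComplement_add_ne_zero hv m
  field_simp
  ring

lemma hasSum_cotTerm {x : ℂ} (hx : x ∈ integerComplement) :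
    HasSum (cotTerm x) (Real.pi * cot (Real.pi * x) - 1 / x) :=
  cot_series_rep' hx ▸ (summable_cotTerm hx).hasSum

lemma hasSum_int_one_div_add_sub_one_div_add {u v : ℂ} (hu : u ∈ integerComplement)
    (hv : v ∈ integerComplement) :
    HasSum (fun m : ℤ => 1 / (u + m) - 1 / (v + m))
      (Real.pi * cot (Real.pi * u) - Real.pi * cot (Real.pi * v)) := by
  have hsum := summable_int_one_div_add_sub_one_div_add hu hv
  have hsymm := (hasSum_nat_add_iff' 1).mpr hsum.hasSum.nat_add_neg
  have hterm (n : ℕ) : cotTerm u n - cotTerm v n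
      = (1 / (u + ((n + 1 : ℕ) : ℤ)) - 1 / (v + ((n + 1 : ℕ) : ℤ)))
        + (1 / (u + (-((n + 1 : ℕ) : ℤ) : ℤ)) - 1 / (v + (-((n + 1 : ℕ) : ℤ) : ℤ))) := by
    simp only [cotTerm]
    push_cast
    ring
  have hcot := (hasSum_cotTerm hu).sub (hasSum_cotTerm hv)
  rw [funext hterm] at hcot
  have huniq := hcot.unique hsymm
  simp only [sum_range_one, Nat.cast_zero, neg_zero, Int.cast_zero, add_zero] at huniq
  rw [hsum.hasSum_iff]
  linear_combination -huniq

end Cotangent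

section EisensteinRow

/-- Eisenstein's simply periodic function `ε₁(u) = ∑ₘ 1 / (u + m p)` of period `p`, summed
symmetrically in `m` and encoded by its closed form. -/
def eisensteinCot (p u : ℂ) : ℂ := Real.pi / p * cot (Real.pi * (u / p))

lemma eisensteinCot_periodic (p : ℂ) : Function.Periodic (eisensteinCot p) p := fun u => by
  rcases eq_or_ne p 0 with rfl | hp
  · rw [add_zero]
  · rw [eisensteinCot, add_div, div_self hp, mul_add, mul_one, cot_periodic, eisensteinCot]

lemma hasSum_eisensteinCot_sub {p u v : ℂ} (hu : u / p ∈ integerComplement)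
    (hv : v / p ∈ integerComplement) :
    HasSum (fun m : ℤ => 1 / (u + m * p) - 1 / (v + m * p))
      (eisensteinCot p u - eisensteinCot p v) := by
  have hp : p ≠ 0 := fun h => integerComplement.ne_zero hu (by rw [h, div_zero])
  have hscale (x : ℂ) (m : ℤ) : p⁻¹ * (1 / (x / p + m)) = 1 / (x + m * p) := by
    field_simp
  have h := (hasSum_int_one_div_add_sub_one_div_add hu hv).mul_left p⁻¹
  simp only [mul_sub, hscale] at h
  have hvalue : p⁻¹ * (Real.pi * cot (Real.pi * (u / p)))
      - p⁻¹ * (Real.pi * cot (Real.pi * (v / p))) = eisensteinCot p u - eisensteinCot p v := by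
    simp only [eisensteinCot]
    ring
  exact hvalue ▸ h

lemma im_pi_mul_add_int_mul_div (z u p : ℂ) (n : ℤ) :
    (Real.pi * ((z + n * u) / p)).im = Real.pi * (z / p).im + n * (Real.pi * (u / p).im) := by
  rw [im_ofReal_mul, add_div, mul_div_assoc, add_im, ← ofReal_intCast, im_ofReal_mul]
  ring

lemma tendsto_eisensteinCot_add_int_mul_atTop {u p : ℂ} (hu : (u / p).im < 0) (z : ℂ) :
    Tendsto (fun n : ℤ => eisensteinCot p (z + n * u)) atTop (𝓝 (Real.pi / p * I)) := by
  refine (tendsto_cot_comap_im_atBot.comp (tendsto_comap_iff.mpr ?_)).const_mul _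
  simp only [Function.comp_def, im_pi_mul_add_int_mul_div]
  exact tendsto_atBot_add_const_left _ _ (tendsto_intCast_atTop_atTop.atTop_mul_const_of_neg
    (mul_neg_of_pos_of_neg Real.pi_pos hu))

lemma tendsto_eisensteinCot_add_int_mul_atBot {u p : ℂ} (hu : (u / p).im < 0) (z : ℂ) :
    Tendsto (fun n : ℤ => eisensteinCot p (z + n * u)) atBot (𝓝 (Real.pi / p * -I)) := by
  refine (tendsto_cot_comap_im_atTop.comp (tendsto_comap_iff.mpr ?_)).const_mul _
  simp only [Function.comp_def, im_pi_mul_add_int_mul_div]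
  exact tendsto_atTop_add_const_left _ _
    ((tendsto_intCast_atBot_iff.mpr tendsto_id).atBot_mul_const_of_neg
      (mul_neg_of_pos_of_neg Real.pi_pos hu))

end EisensteinRow

section WeierstrassZeta

lemma norm_weierstrassZeta_term_le {𝕜 : Type*} [NormedField 𝕜] {z w : 𝕜} (hw : 2 * ‖z‖ < ‖w‖) :
    ‖1 / (z - w) + 1 / w + z / w ^ 2‖ ≤ 2 * ‖z‖ ^ 2 * ‖w‖⁻¹ ^ 3 := by
  have hwpos : 0 < ‖w‖ := lt_of_le_of_lt (by positivity) hw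
  have hhalf : ‖w‖ / 2 ≤ ‖z - w‖ := by
    have htriangle := norm_sub_norm_le w z
    rw [norm_sub_rev] at htriangle
    linarith
  have hw0 : w ≠ 0 := norm_pos_iff.mp hwpos
  have hzw : z - w ≠ 0 := norm_pos_iff.mp (by linarith)
  calc ‖1 / (z - w) + 1 / w + z / w ^ 2‖
      = ‖z ^ 2 / (w ^ 2 * (z - w))‖ := by congr 1; field_simp; ring
    _ = ‖z‖ ^ 2 / (‖w‖ ^ 2 * ‖z - w‖) := by simp
    _ ≤ ‖z‖ ^ 2 / (‖w‖ ^ 2 * (‖w‖ / 2)) := by gcongr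
    _ = 2 * ‖z‖ ^ 2 * ‖w‖⁻¹ ^ 3 := by field_simp

variable (L : PeriodPair)

lemma periodPair_ω₂_ne_zero : L.ω₂ ≠ 0 := by
  simpa using L.indep.ne_zero 1

lemma summable_weierstrassZeta_term (z : ℂ) :
    Summable fun l : L.lattice => 1 / (z - l) + 1 / (l : ℂ) + z / (l : ℂ) ^ 2 := by
  refine Summable.of_norm_bounded_eventually
    ((ZLattice.summable_norm_pow_inv L.lattice 3 (by simp)).mul_left (2 * ‖z‖ ^ 2)) ?_
  have hfinite : (Metric.closedBall (0 : L.lattice) (2 * ‖z‖)).Finite :=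
    isCompact_iff_finite.mp (isCompact_closedBall _ _)
  filter_upwards [hfinite.compl_mem_cofinite] with l hl
  exact norm_weierstrassZeta_term_le (by simpa using hl)

/-- The Weierstrass `ζ`-function of a period lattice. Since `1 / 0 = 0`, the term at `l = 0` is
the principal part `1 / z`. -/
def weierstrassZeta (z : ℂ) : ℂ :=
  ∑' l : L.lattice, (1 / (z - l) + 1 / (l : ℂ) + z / (l : ℂ) ^ 2)

lemma weierstrassZeta_neg (z : ℂ) : weierstrassZeta L (-z) = -weierstrassZeta L z := by
  rw [weierstrassZeta, weierstrassZeta, ← tsum_neg, ← (Equiv.neg L.lattice).tsum_eq]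
  refine tsum_congr fun l => ?_
  rw [Equiv.neg_apply, NegMemClass.coe_neg, ← neg_sub', div_neg, div_neg]
  ring

lemma hasSum_prod_weierstrassZeta (z : ℂ) :
    HasSum (fun x : ℤ × ℤ => 1 / (z + x.1 * L.ω₁ + x.2 * L.ω₂) - 1 / (x.1 * L.ω₁ + x.2 * L.ω₂)
      + z / (x.1 * L.ω₁ + x.2 * L.ω₂) ^ 2) (weierstrassZeta L z) := by
  have hreindex := (L.latticeEquivProd.symm.toEquiv.trans (Equiv.neg _)).hasSum_iff.mpr
    (summable_weierstrassZeta_term L z).hasSum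
  refine hreindex.congr_fun fun x => ?_
  have hcoe : ((L.latticeEquivProd.symm.toEquiv.trans (Equiv.neg _) x : L.lattice) : ℂ)
      = -(x.1 * L.ω₁ + x.2 * L.ω₂) := by
    simp [L.latticeEquiv_symm_apply]
  rw [Function.comp_apply, hcoe, sub_neg_eq_add, div_neg, neg_sq, ← add_assoc, ← sub_eq_add_neg]

variable {L}

lemma add_int_mul_ω₁_div_ω₂_mem_integerComplement {z : ℂ} (hz : z ∉ L.lattice) (n : ℤ) :
    (z + n * L.ω₁) / L.ω₂ ∈ integerComplement := by
  rintro ⟨m, hm⟩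
  have hω₂ := periodPair_ω₂_ne_zero L
  rw [eq_div_iff hω₂] at hm
  refine hz (L.mem_lattice.mpr ⟨-n, m, ?_⟩)
  push_cast
  linear_combination hm

variable (L)

lemma summable_lattice_row (n : ℤ) :
    Summable fun m : ℤ => 1 / (n * L.ω₁ + m * L.ω₂) ^ 2 := by
  have hω₂ := periodPair_ω₂_ne_zero L
  refine ((EisensteinSeries.linear_right_summable (L.ω₁ / L.ω₂) n le_rfl).mul_left
    (L.ω₂ ^ 2)⁻¹).congr fun m => ?_
  rw [zpow_ofNat, ← mul_inv, ← mul_pow, one_div]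
  congr 2
  field_simp

/-- The sum of `1 / w²` over the `n`-th row `n ω₁ + ℤ ω₂` of the lattice. For `n = 0` the junk
value `1 / 0 = 0` drops the term `w = 0`. -/
def latticeRowSum (n : ℤ) : ℂ := ∑' m : ℤ, 1 / (n * L.ω₁ + m * L.ω₂) ^ 2

variable {L}

lemma hasSum_weierstrassZeta_sub {u v : ℂ} (hu : u ∉ L.lattice) (hv : v ∉ L.lattice) :
    HasSum (fun n : ℤ => eisensteinCot L.ω₂ (u + n * L.ω₁) - eisensteinCot L.ω₂ (v + n * L.ω₁)
      + (u - v) * latticeRowSum L n) (weierstrassZeta L u - weierstrassZeta L v) := by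
  refine ((hasSum_prod_weierstrassZeta L u).sub
    (hasSum_prod_weierstrassZeta L v)).prod_fiberwise fun n => ?_
  have hrow := (hasSum_eisensteinCot_sub (add_int_mul_ω₁_div_ω₂_mem_integerComplement hu n)
    (add_int_mul_ω₁_div_ω₂_mem_integerComplement hv n)).add
    ((summable_lattice_row L n).hasSum.mul_left (u - v))
  refine hrow.congr_fun fun m => ?_
  ring

variable (L)

/-- The sum over `ℤ` is the Eisenstein series `G₂` of the lattice, in Eisenstein's order of
summation. -/
lemma hasSum_latticeRowSum :
    HasSum (latticeRowSum L) (weierstrassZeta L (L.ω₂ / 2) / (L.ω₂ / 2)) := by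
  have hω₂ := periodPair_ω₂_ne_zero L
  have hhalf := L.ω₂_div_two_notMem_lattice
  have h := (hasSum_weierstrassZeta_sub hhalf (neg_mem_iff.not.mpr hhalf)).div_const L.ω₂
  have hvalue : (weierstrassZeta L (L.ω₂ / 2) - weierstrassZeta L (-(L.ω₂ / 2))) / L.ω₂
      = weierstrassZeta L (L.ω₂ / 2) / (L.ω₂ / 2) := by
    rw [weierstrassZeta_neg]
    field_simp
    ring
  refine hvalue ▸ h.congr_fun fun n => ?_
  have hperiod := eisensteinCot_periodic L.ω₂ (-(L.ω₂ / 2) + n * L.ω₁)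
  rw [show -(L.ω₂ / 2) + n * L.ω₁ + L.ω₂ = L.ω₂ / 2 + n * L.ω₁ by ring] at hperiod
  rw [hperiod, sub_self, zero_add, sub_neg_eq_add, add_halves, mul_div_cancel_left₀ _ hω₂]

/-- The multiple of `z` subtracted from the Weierstrass `ζ`-function makes it `ω₂`-periodic; this
is the paper's `ζ₂` for an arbitrary period lattice, with `ω₂ = 2iδ`. -/
def weierstrassZeta₂ (z : ℂ) : ℂ :=
  weierstrassZeta L z - weierstrassZeta L (L.ω₂ / 2) / (L.ω₂ / 2) * z

variable {L}

lemma hasSum_weierstrassZeta₂_sub {u v : ℂ} (hu : u ∉ L.lattice) (hv : v ∉ L.lattice) :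
    HasSum (fun n : ℤ => eisensteinCot L.ω₂ (u + n * L.ω₁) - eisensteinCot L.ω₂ (v + n * L.ω₁))
      (weierstrassZeta₂ L u - weierstrassZeta₂ L v) := by
  have h := (hasSum_weierstrassZeta_sub hu hv).sub ((hasSum_latticeRowSum L).mul_left (u - v))
  simp only [add_sub_cancel_right] at h
  have hvalue : weierstrassZeta L u - weierstrassZeta L v
      - (u - v) * (weierstrassZeta L (L.ω₂ / 2) / (L.ω₂ / 2))
      = weierstrassZeta₂ L u - weierstrassZeta₂ L v := by
    simp only [weierstrassZeta₂]
    ring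
  exact hvalue ▸ h

lemma weierstrassZeta₂_add_ω₂ {z : ℂ} (hz : z ∉ L.lattice) :
    weierstrassZeta₂ L (z + L.ω₂) = weierstrassZeta₂ L z := by
  have hz' : z + L.ω₂ ∉ L.lattice := (add_mem_cancel_right L.ω₂_mem_lattice).not.mpr hz
  have h := hasSum_weierstrassZeta₂_sub hz' hz
  simp only [add_right_comm z L.ω₂, eisensteinCot_periodic L.ω₂ _, sub_self] at h
  exact sub_eq_zero.mp (h.unique hasSum_zero)

lemma weierstrassZeta₂_add_ω₁ (hL : 0 < (L.ω₂ / L.ω₁).im) {z : ℂ} (hz : z ∉ L.lattice) :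
    weierstrassZeta₂ L (z + L.ω₁) = weierstrassZeta₂ L z + 2 * Real.pi * I / L.ω₂ := by
  have hz' : z + L.ω₁ ∉ L.lattice := (add_mem_cancel_right L.ω₁_mem_lattice).not.mpr hz
  have him : (L.ω₁ / L.ω₂).im < 0 := by
    rw [← inv_div, inv_im]
    exact div_neg_of_neg_of_pos (neg_neg_of_pos hL) (normSq_pos.mpr fun h => by simp [h] at hL)
  have h := hasSum_weierstrassZeta₂_sub hz' hz
  have hshift (n : ℤ) : z + L.ω₁ + n * L.ω₁ = z + (n + 1 : ℤ) * L.ω₁ := by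
    push_cast
    ring
  simp only [hshift] at h
  have hjump := eq_sub_of_hasSum_int_succ_sub
    (f := fun n : ℤ => eisensteinCot L.ω₂ (z + n * L.ω₁)) h
    (tendsto_eisensteinCot_add_int_mul_atTop him z) (tendsto_eisensteinCot_add_int_mul_atBot him z)
  linear_combination hjump

variable (L)

/-- The paper's `f₂ = ζ₂² - ℘₂` for an arbitrary period lattice, with `ω₂ = 2iδ`. -/
def weierstrassF₂ (z : ℂ) : ℂ :=
  weierstrassZeta₂ L z ^ 2 - (℘[L] z + weierstrassZeta L (L.ω₂ / 2) / (L.ω₂ / 2))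

end WeierstrassZeta

theorem f2_quasi_periodicity_general (L : PeriodPair) (hL : 0 < (L.ω₂ / L.ω₁).im) (z : ℂ)
    (hz : z ∉ L.lattice) :
    weierstrassF₂ L (z + L.ω₁) = weierstrassF₂ L z
        + 2 * (2 * Real.pi * I / L.ω₂) * weierstrassZeta₂ L z + (2 * Real.pi * I / L.ω₂) ^ 2 ∧
    weierstrassF₂ L (z + L.ω₂) = weierstrassF₂ L z := by
  have h℘₁ : ℘[L] (z + L.ω₁) = ℘[L] z := L.weierstrassP_add_coe z ⟨_, L.ω₁_mem_lattice⟩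
  have h℘₂ : ℘[L] (z + L.ω₂) = ℘[L] z := L.weierstrassP_add_coe z ⟨_, L.ω₂_mem_lattice⟩
  constructor
  · rw [weierstrassF₂, weierstrassF₂, h℘₁, weierstrassZeta₂_add_ω₁ hL hz]
    ring
  · rw [weierstrassF₂, weierstrassF₂, h℘₂, weierstrassZeta₂_add_ω₂ hz]

section RectangularLattice

/-- The pair of periods `2ℓ`, `2iδ`, spanning the lattice `Λ` of the paper. -/
def rectPeriodPair {ℓ δ : ℝ} (hℓ : ℓ ≠ 0) (hδ : δ ≠ 0) : PeriodPair where
  ω₁ := 2 * ℓ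
  ω₂ := 2 * (δ * I)
  indep := by
    refine LinearIndependent.pair_iff.mpr fun s t h => ?_
    have hre : s * (2 * ℓ) = 0 := by simpa using congrArg re h
    have him : t * (2 * δ) = 0 := by simpa using congrArg im h
    exact ⟨(mul_eq_zero.mp hre).resolve_right (mul_ne_zero two_ne_zero hℓ),
      (mul_eq_zero.mp him).resolve_right (mul_ne_zero two_ne_zero hδ)⟩

variable {ℓ δ : ℝ} (hℓ : ℓ ≠ 0) (hδ : δ ≠ 0)

lemma coe_rectPeriodPair_lattice : ((rectPeriodPair hℓ hδ).lattice : Set ℂ) = Lambda ℓ δ := by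
  ext z
  simp only [SetLike.mem_coe, PeriodPair.mem_lattice, rectPeriodPair, Lambda, Set.mem_ofPred_eq]
  refine exists₂_congr fun n m => ?_
  rw [eq_comm, mul_left_comm, mul_left_comm (m : ℂ), mul_assoc, mul_assoc]

lemma tsum_rectPeriodPair_lattice {f : ℂ → ℂ}
    (hf : Summable fun l : (rectPeriodPair hℓ hδ).lattice => f l) :
    ∑' l : (rectPeriodPair hℓ hδ).lattice, f l = f 0 + ∑' w : latticePts ℓ δ, f w := by
  rw [latticePts, ← coe_rectPeriodPair_lattice hℓ hδ]
  exact tsum_subtype_eq_add_tsum_sdiff_singleton (zero_mem (rectPeriodPair hℓ hδ).lattice) hf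

lemma weierstrassP_rectPeriodPair (z : ℂ) : ℘[rectPeriodPair hℓ hδ] z = wP ℓ δ z := by
  rw [PeriodPair.weierstrassP, tsum_rectPeriodPair_lattice hℓ hδ
    (f := fun w => 1 / (z - w) ^ 2 - 1 / w ^ 2)
    ((rectPeriodPair hℓ hδ).hasSum_weierstrassP z).summable]
  simp [wP]

lemma weierstrassZeta_rectPeriodPair (z : ℂ) :
    weierstrassZeta (rectPeriodPair hℓ hδ) z = wZeta ℓ δ z := by
  rw [weierstrassZeta, tsum_rectPeriodPair_lattice hℓ hδ
    (f := fun w => 1 / (z - w) + 1 / w + z / w ^ 2)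
    (summable_weierstrassZeta_term (rectPeriodPair hℓ hδ) z)]
  simp [wZeta]

lemma rectPeriodPair_ω₂_div_two : (rectPeriodPair hℓ hδ).ω₂ / 2 = δ * I :=
  mul_div_cancel_left₀ _ two_ne_zero

lemma weierstrassZeta₂_rectPeriodPair (z : ℂ) :
    weierstrassZeta₂ (rectPeriodPair hℓ hδ) z = zeta2 ℓ δ z := by
  simp only [weierstrassZeta₂, zeta2, weierstrassZeta_rectPeriodPair, rectPeriodPair_ω₂_div_two]

lemma weierstrassF₂_rectPeriodPair (z : ℂ) :
    weierstrassF₂ (rectPeriodPair hℓ hδ) z = f2 ℓ δ z := by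
  simp only [weierstrassF₂, f2, wp2, weierstrassZeta₂_rectPeriodPair, weierstrassP_rectPeriodPair,
    weierstrassZeta_rectPeriodPair, rectPeriodPair_ω₂_div_two]

lemma rectPeriodPair_ω₂_div_ω₁_im :
    ((rectPeriodPair hℓ hδ).ω₂ / (rectPeriodPair hℓ hδ).ω₁).im = δ / ℓ := by
  rw [rectPeriodPair, mul_div_mul_left _ _ two_ne_zero, div_ofReal_im, im_ofReal_mul, I_im, mul_one]

lemma two_pi_I_div_rectPeriodPair_ω₂ :
    2 * Real.pi * I / (rectPeriodPair hℓ hδ).ω₂ = Real.pi / δ := by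
  rw [rectPeriodPair, mul_assoc, mul_div_mul_left _ _ two_ne_zero, mul_div_mul_right _ _ I_ne_zero]

end RectangularLattice

/-- Quasi-periodicity of `f₂`: `f₂(z+2ℓ) = f₂(z) + (2π/δ)ζ₂(z) + (π/δ)²` and
`f₂(z+2iδ) = f₂(z)`. -/
theorem f2_quasi_periodicity
    (ℓ δ : ℝ) (hℓ : 0 < ℓ) (hδ : 0 < δ)
    (z : ℂ) (hz : z ∉ Lambda ℓ δ) (hz' : z + 2 * (ℓ : ℂ) ∉ Lambda ℓ δ) :
    f2 ℓ δ (z + 2 * (ℓ : ℂ))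
      = f2 ℓ δ z + (2 * (Real.pi : ℂ) / (δ : ℂ)) * zeta2 ℓ δ z + ((Real.pi : ℂ) / (δ : ℂ)) ^ 2 ∧
    f2 ℓ δ (z + 2 * ((δ : ℂ) * Complex.I)) = f2 ℓ δ z := by
  have hL := rectPeriodPair_ω₂_div_ω₁_im hℓ.ne' hδ.ne' ▸ div_pos hδ hℓ
  have hzL : z ∉ (rectPeriodPair hℓ.ne' hδ.ne').lattice := by
    rwa [← SetLike.mem_coe, coe_rectPeriodPair_lattice]
  have h := f2_quasi_periodicity_general (rectPeriodPair hℓ.ne' hδ.ne') hL z hzL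
  rw [two_pi_I_div_rectPeriodPair_ω₂] at h
  simp only [weierstrassF₂_rectPeriodPair, weierstrassZeta₂_rectPeriodPair] at h
  rwa [mul_div_assoc]

end
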